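/- Lemma 8: Let U₁₀ = 3 + η₁ + 2η₂ + 3η₃. If d > 3 is a prime divisor of gcd(U₁₀, (4^p − 1)/3), then either d = 11, or d = 1 + 2p and 3p = 4(3+4y)² + 83. -/

import Mathlib

/-!
Modulo `d` the number `4` is a primitive `p`-th root of unity, so the `η_i` reduce to the quartic
Gauss periods in characteristic `d`. The relations between the Gauss sums of a quartic character
and its Jacobi sum, whose imaginary part `2y` is determined by the cyclotomic number `(0,1)₄`,
turn the vanishing of `U₁₀` into `d ∣ (5p + 9)² - 4p(3 + 4y)²`. Here `d = 1 + kp` with `k` even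
and `k ≠ 4`, since otherwise `2` would be a quadratic residue modulo `d ≡ 5 (mod 8)`. The
quotient of `(5p + 9)² - 4p(3 + 4y)²` by `d` is positive, divisible by `8` and congruent to `81`
modulo `p`. Comparing sizes leaves finitely many `k`, and divisibility by `3` and `7` excludes all
but `k = 2`, apart from the cases `p = 5` and `p = 13`, which give `d = 11`.
-/

open Finset

/-- The cyclotomic class `D_i` of order 4 modulo `p` with respect to the
primitive root `θ`: `{θ^(i+4j) mod p : 0 ≤ j < (p-1)/4}`. -/
def cycD (p θ i : ℕ) : Finset ℕ :=
  (Finset.range ((p - 1) / 4)).image fun j => θ ^ (i + 4 * j) % p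

/-- `η_i = Σ_{t ∈ D_i} 4^t` as an integer. -/
def eta4 (p θ : ℕ) (i : ℕ) : ℤ := ∑ t ∈ cycD p θ i, (4 : ℤ) ^ t

/-- `H = η₀ + η₂ − η₁ − η₃`. -/
def Hval (p θ : ℕ) : ℤ := eta4 p θ 0 + eta4 p θ 2 - eta4 p θ 1 - eta4 p θ 3

open Zsqrtd (sqrtd)

section CharacterSums

variable {F R : Type*} [Field F] [CommRing R]

lemma sum_range_pow_mul_mulChar_pow_apply [IsDomain R] [DecidableEq R] {χ : MulChar F R} {e : ℕ}
    (hχ : χ ^ e = 1) {w : R} (hw : w ^ e = 1) (a : F) :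
    ∑ n ∈ range e, w ^ n * (χ ^ n) a = if w * χ a = 1 then (e : R) else 0 := by
  rcases eq_or_ne a 0 with rfl | ha
  · simp [MulChar.map_zero]
  have hpow (n : ℕ) : (χ ^ n) a = χ a ^ n := by
    simpa using MulChar.pow_apply_coe χ n (Units.mk0 a ha)
  simp only [hpow, ← mul_pow]
  split_ifs with h
  · simp [h]
  · have hone : (w * χ a) ^ e = 1 := by
      rw [mul_pow, hw, one_mul, ← hpow, hχ, MulChar.one_apply ha.isUnit]
    have hgeom := mul_geom_sum (w * χ a) e
    rw [hone, sub_self] at hgeom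
    exact (mul_eq_zero.mp hgeom).resolve_left (sub_ne_zero.mpr h)

variable [Fintype F]

lemma sum_mulChar_mul_mulChar_add_one (φ ψ : MulChar F R) :
    ∑ a, φ a * ψ (a + 1) = φ (-1) * jacobiSum φ ψ := by
  rw [jacobiSum, mul_sum, ← Equiv.sum_comp (Equiv.neg F)]
  refine sum_congr rfl fun a _ => ?_
  rw [Equiv.neg_apply, neg_eq_neg_one_mul a, map_mul, mul_assoc, ← neg_eq_neg_one_mul,
    neg_add_eq_sub]

variable [IsDomain R]

lemma sq_mul_card_filter_mulChar_mulChar_add_one [DecidableEq R] {χ : MulChar F R} {e : ℕ}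
    (hχ : χ ^ e = 1) {v w : R} (hv : v ^ e = 1) (hw : w ^ e = 1) :
    (e : R) ^ 2 * #{a | v * χ a = 1 ∧ w * χ (a + 1) = 1} =
      ∑ m ∈ range e, ∑ n ∈ range e,
        v ^ m * w ^ n * ((χ ^ m) (-1) * jacobiSum (χ ^ m) (χ ^ n)) := by
  calc (e : R) ^ 2 * #{a | v * χ a = 1 ∧ w * χ (a + 1) = 1}
      = ∑ a, (if v * χ a = 1 then (e : R) else 0) *
          (if w * χ (a + 1) = 1 then (e : R) else 0) := by
        rw [card_filter, Nat.cast_sum, mul_sum]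
        refine sum_congr rfl fun a _ => ?_
        split_ifs <;> simp_all [sq]
    _ = ∑ a, ∑ m ∈ range e, ∑ n ∈ range e,
          v ^ m * w ^ n * ((χ ^ m) a * (χ ^ n) (a + 1)) := by
        refine sum_congr rfl fun a _ => ?_
        rw [← sum_range_pow_mul_mulChar_pow_apply hχ hv,
          ← sum_range_pow_mul_mulChar_pow_apply hχ hw, sum_mul_sum]
        exact sum_congr rfl fun m _ => sum_congr rfl fun n _ => by ring
    _ = _ := by
        rw [sum_comm]
        refine sum_congr rfl fun m _ => ?_
        rw [sum_comm]
        refine sum_congr rfl fun n _ => ?_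
        rw [← mul_sum, sum_mulChar_mul_mulChar_add_one]

lemma gaussSum_mul_gaussSum_inv {χ : MulChar F R} (hχ : χ ≠ 1) {ψ : AddChar F R}
    (hψ : ψ.IsPrimitive) :
    gaussSum χ ψ * gaussSum χ⁻¹ ψ = χ (-1) * Fintype.card F := by
  rw [← gaussSum_mul_gaussSum_eq_card hχ hψ, ← mul_gaussSum_inv_eq_gaussSum χ⁻¹ ψ,
    MulChar.inv_apply', inv_neg_one]
  ring

end CharacterSums

lemma orderOf_ringHomComp_of_injective {M R S : Type*} [CommMonoid M] [CommRing R]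
    [CommRing S] (χ : MulChar M R) {f : R →+* S} (hf : Function.Injective f) :
    orderOf (χ.ringHomComp f) = orderOf χ :=
  orderOf_eq_orderOf_iff.mpr fun n => by
    rw [MulChar.ringHomComp_pow, MulChar.ringHomComp_eq_one_iff hf]

section OrderFour

variable {G : Type*} [Group G] {g : G}

lemma ne_one_of_orderOf_eq_four (hg : orderOf g = 4) : g ≠ 1 := by
  rintro rfl
  simp at hg

lemma sq_ne_one_of_orderOf_eq_four (hg : orderOf g = 4) : g ^ 2 ≠ 1 :=
  pow_ne_one_of_lt_orderOf two_ne_zero (by omega)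

lemma pow_four_eq_one_of_orderOf_eq_four (hg : orderOf g = 4) : g ^ 4 = 1 :=
  hg ▸ pow_orderOf_eq_one g

lemma pow_three_eq_inv_of_orderOf_eq_four (hg : orderOf g = 4) : g ^ 3 = g⁻¹ := by
  rw [eq_inv_iff_mul_eq_one, ← pow_succ, pow_four_eq_one_of_orderOf_eq_four hg]

lemma inv_sq_eq_sq_of_orderOf_eq_four (hg : orderOf g = 4) : g⁻¹ ^ 2 = g ^ 2 := by
  rw [inv_pow, inv_eq_iff_mul_eq_one, ← pow_add, pow_four_eq_one_of_orderOf_eq_four hg]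

end OrderFour

section QuarticCharacter

variable {F R : Type*} [Field F] [CommRing R] {χ : MulChar F R}

lemma mulChar_sq_neg_one (χ : MulChar F R) : (χ ^ 2) (-1) = 1 := by
  rw [MulChar.pow_apply' _ two_ne_zero, ← map_pow, neg_one_sq, map_one]

variable [Fintype F] [IsDomain R] {ψ : AddChar F R}

lemma gaussSum_sq_eq_jacobiSum_mul_gaussSum_sq (hχ : χ ^ 2 ≠ 1) (ψ : AddChar F R) :
    gaussSum χ ψ ^ 2 = jacobiSum χ χ * gaussSum (χ ^ 2) ψ := by
  rw [sq, sq, ← jacobiSum_mul_nontrivial (by rwa [← sq]) ψ, mul_comm]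

lemma gaussSum_sq_sq_of_orderOf_eq_four (hχ : orderOf χ = 4) (hψ : ψ.IsPrimitive) :
    gaussSum (χ ^ 2) ψ ^ 2 = Fintype.card F := by
  have h := gaussSum_mul_gaussSum_inv (sq_ne_one_of_orderOf_eq_four hχ) hψ
  rwa [← inv_pow, inv_sq_eq_sq_of_orderOf_eq_four hχ, mulChar_sq_neg_one, one_mul,
    ← sq] at h

lemma jacobiSum_sq_of_orderOf_eq_four (hχ : orderOf χ = 4) (hψ : ψ.IsPrimitive)
    (hcard : (Fintype.card F : R) ≠ 0) :
    jacobiSum χ (χ ^ 2) = χ (-1) * jacobiSum χ χ := by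
  have hinv := gaussSum_mul_gaussSum_inv (ne_one_of_orderOf_eq_four hχ) hψ
  have hsq := gaussSum_sq_eq_jacobiSum_mul_gaussSum_sq
    (sq_ne_one_of_orderOf_eq_four hχ) ψ
  have hsqsq := gaussSum_sq_sq_of_orderOf_eq_four hχ hψ
  have hcube : gaussSum χ⁻¹ ψ * jacobiSum χ (χ ^ 2) = gaussSum χ ψ * gaussSum (χ ^ 2) ψ := by
    rw [← pow_three_eq_inv_of_orderOf_eq_four hχ, pow_succ' χ 2]
    refine jacobiSum_mul_nontrivial ?_ ψ
    rw [← pow_succ']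
    exact pow_ne_one_of_lt_orderOf three_ne_zero (by omega)
  have hneg : χ (-1) ^ 2 = 1 := by rw [← map_pow, neg_one_sq, map_one]
  refine mul_left_cancel₀ hcard ?_
  linear_combination -χ (-1) * jacobiSum χ (χ ^ 2) * hinv + χ (-1) * gaussSum χ ψ * hcube +
    χ (-1) * gaussSum (χ ^ 2) ψ * hsq + χ (-1) * jacobiSum χ χ * hsqsq -
    Fintype.card F * jacobiSum χ (χ ^ 2) * hneg

end QuarticCharacter

section GaussianIntCharacter

lemma isPrimitiveRoot_sqrtd : IsPrimitiveRoot (sqrtd : GaussianInt) 4 :=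
  IsPrimitiveRoot.mk_of_lt _ (by norm_num) (by decide) fun l hl0 hl4 => by
    interval_cases l <;> decide

lemma ringInverse_eq_conj_of_isUnit {z : GaussianInt} (hz : IsUnit z) :
    Ring.inverse z = starRingEnd GaussianInt z := by
  have hnorm : z * star z = 1 := by
    rw [← Zsqrtd.norm_eq_mul_conj, (Zsqrtd.norm_eq_one_iff' (by norm_num) z).mpr hz, Int.cast_one]
  rw [starRingEnd_apply, ← mul_one (Ring.inverse z), ← hnorm, Ring.inverse_mul_cancel_left _ _ hz]

variable {F : Type*} [Field F]

lemma mulChar_inv_eq_ringHomComp_conj (χ : MulChar F GaussianInt) :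
    χ⁻¹ = χ.ringHomComp (starRingEnd GaussianInt) := by
  refine MulChar.ext fun a => ?_
  rw [MulChar.inv_apply_eq_inv, MulChar.ringHomComp_apply,
    ringInverse_eq_conj_of_isUnit (a.isUnit.map χ)]

variable [Fintype F]

lemma jacobiSum_inv_inv_eq_star (χ φ : MulChar F GaussianInt) :
    jacobiSum χ⁻¹ φ⁻¹ = star (jacobiSum χ φ) := by
  rw [mulChar_inv_eq_ringHomComp_conj, mulChar_inv_eq_ringHomComp_conj, jacobiSum_ringHomComp,
    starRingEnd_apply]

lemma sq_re_add_sq_im_jacobiSum {χ φ : MulChar F GaussianInt} (hχ : χ ≠ 1) (hφ : φ ≠ 1)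
    (hχφ : χ * φ ≠ 1) :
    (jacobiSum χ φ).re ^ 2 + (jacobiSum χ φ).im ^ 2 = Fintype.card F := by
  have hinj := GaussianInt.toComplex_injective
  have hnorm : jacobiSum χ φ * star (jacobiSum χ φ) = Fintype.card F := by
    apply hinj
    rw [← jacobiSum_inv_inv_eq_star, map_mul, ← jacobiSum_ringHomComp, ← jacobiSum_ringHomComp,
      ← MulChar.ringHomComp_inv, ← MulChar.ringHomComp_inv, map_natCast]
    refine jacobiSum_mul_jacobiSum_inv ?_ ((MulChar.ringHomComp_ne_one_iff hinj).mpr hχ)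
      ((MulChar.ringHomComp_ne_one_iff hinj).mpr hφ) ?_
    · rw [ringChar.eq_zero]
      exact (CharP.ringChar_ne_zero_of_finite F).symm
    · rw [← MulChar.ringHomComp_mul]
      exact (MulChar.ringHomComp_ne_one_iff hinj).mpr hχφ
  have hre := congrArg Zsqrtd.re hnorm
  simp only [Zsqrtd.re_mul, Zsqrtd.re_star, Zsqrtd.im_star, Zsqrtd.re_natCast] at hre
  linear_combination hre

lemma jacobiSum_sq_gaussianInt {χ : MulChar F GaussianInt} (hχ : orderOf χ = 4) :
    jacobiSum χ (χ ^ 2) = χ (-1) * jacobiSum χ χ := by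
  have hinj := GaussianInt.toComplex_injective
  have hψ := AddChar.FiniteField.primitiveChar_to_Complex_isPrimitive F
  have h := jacobiSum_sq_of_orderOf_eq_four
    (hχ ▸ orderOf_ringHomComp_of_injective χ hinj) hψ (by simp)
  rw [MulChar.ringHomComp_pow, jacobiSum_ringHomComp, jacobiSum_ringHomComp,
    MulChar.ringHomComp_apply, ← map_mul] at h
  exact hinj h

lemma sum_range_four_jacobiSum {χ : MulChar F GaussianInt} (hχ : orderOf χ = 4)
    (hneg : χ (-1) = -1) :
    ∑ m ∈ range 4, ∑ n ∈ range 4,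
        (1 : GaussianInt) ^ m * (-sqrtd) ^ n * ((χ ^ m) (-1) * jacobiSum (χ ^ m) (χ ^ n)) =
      (Fintype.card F : GaussianInt) + 1 + 2 * sqrtd * (jacobiSum χ χ - star (jacobiSum χ χ)) -
        (jacobiSum χ χ + star (jacobiSum χ χ)) := by
  have hχ1 := ne_one_of_orderOf_eq_four hχ
  have hχ2 := sq_ne_one_of_orderOf_eq_four hχ
  have hχ2inv : (χ ^ 2)⁻¹ = χ ^ 2 := by rw [← inv_pow, inv_sq_eq_sq_of_orderOf_eq_four hχ]
  have hneg_inv : χ⁻¹ (-1) = -1 := by rw [MulChar.inv_apply', inv_neg_one, hneg]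
  have hneg_one : (1 : MulChar F GaussianInt) (-1) = 1 := MulChar.one_apply isUnit_one.neg
  have hJ02 := jacobiSum_one_nontrivial hχ2
  have hJ11 := jacobiSum_inv_inv_eq_star χ χ
  have hJ12 : jacobiSum χ (χ ^ 2) = -jacobiSum χ χ := by
    rw [jacobiSum_sq_gaussianInt hχ, hneg, neg_one_mul]
  have hJ32 : jacobiSum χ⁻¹ (χ ^ 2) = -star (jacobiSum χ χ) := by
    rw [← hχ2inv, jacobiSum_inv_inv_eq_star, hJ12, star_neg]
  have hJ13 : jacobiSum χ χ⁻¹ = 1 := by rw [jacobiSum_nontrivial_inv hχ1, hneg, neg_neg]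
  have hJ22 : jacobiSum (χ ^ 2) (χ ^ 2) = -1 := by
    simpa only [hχ2inv, mulChar_sq_neg_one] using jacobiSum_nontrivial_inv hχ2
  have hI : (sqrtd : GaussianInt) ^ 2 = -1 := by decide
  simp only [sum_range_succ, sum_range_zero, pow_zero, pow_one,
    pow_three_eq_inv_of_orderOf_eq_four hχ, hneg, hneg_inv, hneg_one, mulChar_sq_neg_one,
    jacobiSum_comm _ (1 : MulChar F GaussianInt), jacobiSum_comm (χ ^ 2) χ,
    jacobiSum_comm (χ ^ 2) χ⁻¹, jacobiSum_comm χ⁻¹ χ, jacobiSum_one_one,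
    jacobiSum_one_nontrivial hχ1, jacobiSum_one_nontrivial (inv_ne_one.mpr hχ1),
    hJ02, hJ11, hJ12, hJ32, hJ13, hJ22]
  linear_combination
    (2 * sqrtd - 2 + jacobiSum χ χ + (1 + 2 * sqrtd) * star (jacobiSum χ χ)) * hI

lemma sixteen_mul_card_filter_eq_one_and_add_one_eq_sqrtd {χ : MulChar F GaussianInt}
    (hχ : orderOf χ = 4) (hneg : χ (-1) = -1) :
    16 * (#{a | χ a = 1 ∧ χ (a + 1) = sqrtd} : ℤ) =
      Fintype.card F + 1 - 2 * (jacobiSum χ χ).re - 4 * (jacobiSum χ χ).im := by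
  have hI : (-sqrtd : GaussianInt) ^ 4 = 1 := by decide
  have hsqrtd (z : GaussianInt) : -sqrtd * z = 1 ↔ z = sqrtd := by
    refine ⟨fun h => ?_, by rintro rfl; decide⟩
    have hinv : (sqrtd : GaussianInt) * -sqrtd = 1 := by decide
    rw [← one_mul z, ← hinv, mul_assoc, h, mul_one]
  have h := sq_mul_card_filter_mulChar_mulChar_add_one
    (pow_four_eq_one_of_orderOf_eq_four hχ) (one_pow 4) hI
  rw [sum_range_four_jacobiSum hχ hneg] at h
  simp only [one_mul, hsqrtd] at h
  have hre := congrArg Zsqrtd.re h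
  simp only [sq, Nat.cast_ofNat, Zsqrtd.re_mul, Zsqrtd.im_mul, Zsqrtd.re_add, Zsqrtd.re_sub,
    Zsqrtd.im_sub, Zsqrtd.re_star, Zsqrtd.im_star, Zsqrtd.re_natCast, Zsqrtd.im_natCast,
    Zsqrtd.re_ofNat, Zsqrtd.im_ofNat, Zsqrtd.re_one, Zsqrtd.re_sqrtd, Zsqrtd.im_sqrtd] at hre
  linear_combination hre

end GaussianIntCharacter

section CharacterOfPrimitiveRoot

variable {F R : Type*} [Field F] [Fintype F] [CommRing R] {θ : F}

lemma exists_unit_generator_of_isPrimitiveRoot (hθ : IsPrimitiveRoot θ (Fintype.card F - 1)) :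
    ∃ g : Fˣ, g = θ ∧ ∀ u, u ∈ Subgroup.zpowers g := by
  have hcard : NeZero (Fintype.card F - 1) :=
    ⟨(Nat.sub_pos_of_lt Fintype.one_lt_card).ne'⟩
  obtain ⟨g, rfl⟩ := hθ.isUnit hcard.out
  refine ⟨g, rfl, fun u => ?_⟩
  rw [(IsPrimitiveRoot.coe_units_iff.mp hθ).zpowers_eq, mem_rootsOfUnity]
  exact Units.ext (by simpa using FiniteField.pow_card_sub_one_eq_one (u : F) u.ne_zero)

lemma exists_mulChar_apply_eq (hθ : IsPrimitiveRoot θ (Fintype.card F - 1)) {ζ : R}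
    (hζ : ζ ^ (Fintype.card F - 1) = 1) : ∃ χ : MulChar F R, χ θ = ζ := by
  classical
  obtain ⟨g, rfl, hg⟩ := exists_unit_generator_of_isPrimitiveRoot hθ
  have hcard : Fintype.card F - 1 ≠ 0 := (Nat.sub_pos_of_lt Fintype.one_lt_card).ne'
  have hmem : Units.ofPowEqOne ζ _ hζ hcard ∈ rootsOfUnity (Fintype.card Fˣ) R := by
    rw [Fintype.card_units, mem_rootsOfUnity, Units.pow_ofPowEqOne]
  exact ⟨MulChar.ofRootOfUnity hmem hg, MulChar.ofRootOfUnity_spec hmem hg⟩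

lemma orderOf_mulChar_eq_orderOf_apply (hθ : IsPrimitiveRoot θ (Fintype.card F - 1))
    (χ : MulChar F R) : orderOf χ = orderOf (χ θ) := by
  obtain ⟨g, rfl, hg⟩ := exists_unit_generator_of_isPrimitiveRoot hθ
  refine orderOf_eq_orderOf_iff.mpr fun n => ?_
  rw [MulChar.eq_iff hg, MulChar.pow_apply_coe, MulChar.one_apply_coe]

lemma mulChar_neg_one_of_card_mod_eight {χ : MulChar F GaussianInt}
    (hcard : Fintype.card F % 8 = 5) (hθ : IsPrimitiveRoot θ (Fintype.card F - 1))
    (hχ : χ θ = sqrtd) : χ (-1) = -1 := by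
  have hpow : θ ^ ((Fintype.card F - 1) / 2) = -1 :=
    (hθ.pow (by omega) (by omega)).eq_neg_one_of_two_right
  obtain ⟨k, hk⟩ : ∃ k, (Fintype.card F - 1) / 2 = 4 * k + 2 := ⟨Fintype.card F / 8, by omega⟩
  rw [← hpow, map_pow, hχ, hk, pow_add, pow_mul, isPrimitiveRoot_sqrtd.pow_eq_one, one_pow]
  decide

end CharacterOfPrimitiveRoot

section CyclotomicClasses

variable {p θ : ℕ} [Fact p.Prime]

lemma lt_of_mem_cycD {k t : ℕ} (h : t ∈ cycD p θ k) : t < p := by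
  obtain ⟨j, -, rfl⟩ := mem_image.mp h
  exact Nat.mod_lt _ (Fact.out : p.Prime).pos

variable {χ : MulChar (ZMod p) GaussianInt}

lemma mem_cycD_iff (hp4 : 4 ∣ p - 1) (hθ : IsPrimitiveRoot (θ : ZMod p) (p - 1))
    (hχ : χ θ = sqrtd) {k t : ℕ} (hk : k < 4) (ht : t < p) :
    t ∈ cycD p θ k ↔ χ t = sqrtd ^ k := by
  have hpow (i j : ℕ) : χ ((θ : ZMod p) ^ (i + 4 * j)) = sqrtd ^ i := by
    rw [map_pow, hχ, pow_add, pow_mul, isPrimitiveRoot_sqrtd.pow_eq_one, one_pow, mul_one]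
  constructor
  · intro h
    obtain ⟨j, -, rfl⟩ := mem_image.mp h
    rw [ZMod.natCast_mod, Nat.cast_pow, hpow]
  · intro h
    have ht0 : (t : ZMod p) ≠ 0 := by
      intro h0
      rw [h0, MulChar.map_zero] at h
      exact pow_ne_zero k (isPrimitiveRoot_sqrtd.ne_zero (by norm_num)) h.symm
    have hp1 : NeZero (p - 1) := ⟨(Nat.sub_pos_of_lt (Fact.out : p.Prime).one_lt).ne'⟩
    obtain ⟨n, hn, hθn⟩ := hθ.eq_pow_of_pow_eq_one (ZMod.pow_card_sub_one_eq_one ht0)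
    have hn4 : n % 4 + 4 * (n / 4) = n := Nat.mod_add_div n 4
    have hnk : n % 4 = k := by
      refine isPrimitiveRoot_sqrtd.pow_inj (Nat.mod_lt _ (by norm_num)) hk ?_
      rw [← h, ← hθn, ← hpow (n % 4) (n / 4), hn4]
    refine mem_image.mpr ⟨n / 4, mem_range.mpr (by omega), ?_⟩
    rw [← hnk, hn4, ← ZMod.val_natCast, Nat.cast_pow, hθn, ZMod.val_cast_of_lt ht]

lemma sum_cycD {M : Type*} [AddCommMonoid M] (hp4 : 4 ∣ p - 1)
    (hθ : IsPrimitiveRoot (θ : ZMod p) (p - 1)) (hχ : χ θ = sqrtd) {k : ℕ} (hk : k < 4)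
    (f : ZMod p → M) : ∑ t ∈ cycD p θ k, f t = ∑ t with χ t = sqrtd ^ k, f t := by
  refine sum_nbij' (fun t : ℕ => (t : ZMod p)) ZMod.val (fun t ht => ?_) (fun t ht => ?_)
    (fun t ht => ZMod.val_cast_of_lt (lt_of_mem_cycD ht)) (by simp) (by simp)
  · exact mem_filter.mpr ⟨mem_univ _, (mem_cycD_iff hp4 hθ hχ hk (lt_of_mem_cycD ht)).mp ht⟩
  · rw [mem_cycD_iff hp4 hθ hχ hk (ZMod.val_lt t), ZMod.natCast_zmod_val]
    exact (mem_filter.mp ht).2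

lemma card_filter_cycD_zero_one (hp4 : 4 ∣ p - 1) (hθ : IsPrimitiveRoot (θ : ZMod p) (p - 1))
    (hχ : χ θ = sqrtd) :
    #{a ∈ cycD p θ 0 | (a + 1) % p ∈ cycD p θ 1} = #{a | χ a = 1 ∧ χ (a + 1) = sqrtd} := by
  have hsucc (a : ℕ) : (a + 1) % p ∈ cycD p θ 1 ↔ χ (a + 1) = sqrtd := by
    rw [mem_cycD_iff hp4 hθ hχ (by norm_num) (Nat.mod_lt _ (Fact.out : p.Prime).pos),
      ZMod.natCast_mod, pow_one, Nat.cast_succ]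
  simp only [hsucc, card_filter, ← filter_filter]
  rw [sum_cycD hp4 hθ hχ (by norm_num) fun a => if χ (a + 1) = sqrtd then 1 else 0, pow_zero]

end CyclotomicClasses

section TwoSquares

lemma mul_eq_zero_of_dvd_of_sq_add_sq_eq_sq {n u v : ℤ} (hn : n ≠ 0) (hdvd : n ∣ u)
    (h : u ^ 2 + v ^ 2 = n ^ 2) : u * v = 0 := by
  obtain ⟨t, rfl⟩ := hdvd
  obtain ⟨s, rfl⟩ : n ∣ v :=
    (Int.pow_dvd_pow_iff two_ne_zero).mp ⟨1 - t ^ 2, by linear_combination h⟩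
  have hts : t ^ 2 + s ^ 2 = 1 :=
    mul_left_cancel₀ (pow_ne_zero 2 hn) (by linear_combination h)
  rcases eq_or_ne t 0 with rfl | ht
  · simp
  · have hs : s = 0 := by nlinarith [Int.one_le_abs ht, sq_abs t, sq_nonneg s]
    simp [hs]

lemma sq_eq_sq_of_prime_eq_sq_add_sq {p a b c d : ℤ} (hp : Prime p)
    (hab : p = a ^ 2 + b ^ 2) (hcd : p = c ^ 2 + d ^ 2) :
    (a ^ 2 = c ^ 2 ∧ b ^ 2 = d ^ 2) ∨ (a ^ 2 = d ^ 2 ∧ b ^ 2 = c ^ 2) := by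
  have key (e : ℤ) (hce : p = c ^ 2 + e ^ 2) (hdvd : p ∣ a * e - b * c) :
      (a ^ 2 = c ^ 2 ∧ b ^ 2 = e ^ 2) ∨ (a ^ 2 = e ^ 2 ∧ b ^ 2 = c ^ 2) := by
    have hprod := mul_eq_zero_of_dvd_of_sq_add_sq_eq_sq (v := a * c + b * e) hp.ne_zero hdvd
      (by linear_combination -(c ^ 2 + e ^ 2) * hab - p * hce)
    rcases mul_eq_zero.mp hprod with h | h
    · have hbe : b ^ 2 = e ^ 2 := mul_left_cancel₀ hp.ne_zero <| by
        linear_combination b ^ 2 * hce - e ^ 2 * hab - (a * e + b * c) * h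
      exact .inl ⟨by linear_combination hce - hab - hbe, hbe⟩
    · have hbc : b ^ 2 = c ^ 2 := mul_left_cancel₀ hp.ne_zero <| by
        linear_combination b ^ 2 * hce - c ^ 2 * hab - (a * c - b * e) * h
      exact .inr ⟨by linear_combination hce - hab - hbc, hbc⟩
  have hdvd : p ∣ (a * d - b * c) * (a * -d - b * c) :=
    ⟨b ^ 2 - d ^ 2, by linear_combination d ^ 2 * hab - b ^ 2 * hcd⟩
  rcases hp.dvd_or_dvd hdvd with h | h
  · exact key d hcd h
  · simpa using key (-d) (by rwa [neg_sq]) h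

lemma eq_two_mul_of_prime_eq_sq_add_sq {p a b x y : ℤ} (hp : Prime p)
    (hab : p = a ^ 2 + b ^ 2) (hxy : p = x ^ 2 + 4 * y ^ 2) (h : x - 4 * y = -a - 2 * b) :
    b = 2 * y := by
  have hx : ¬Even x := by
    rintro ⟨u, rfl⟩
    have h4 : 2 * 2 ∣ p := ⟨u ^ 2 + y ^ 2, by linear_combination hxy⟩
    exact absurd (hp.squarefree 2 h4) (by decide)
  rcases sq_eq_sq_of_prime_eq_sq_add_sq (c := x) (d := 2 * y) hp hab
    (by linear_combination hxy) with ⟨hax, hby⟩ | ⟨hay, -⟩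
  · rcases sq_eq_sq_iff_eq_or_eq_neg.mp hax with rfl | rfl <;>
      rcases sq_eq_sq_iff_eq_or_eq_neg.mp hby with rfl | rfl <;> grind
  · have ha : Even a := (Int.even_pow.mp (hay ▸ (even_two_mul y).pow_of_ne_zero two_ne_zero)).1
    grind

end TwoSquares

section JacobiSumOfCyclotomicNumber

variable {p : ℕ} [Fact p.Prime]

lemma im_jacobiSum_eq_two_mul {χ : MulChar (ZMod p) GaussianInt} (hχ : orderOf χ = 4)
    (hneg : χ (-1) = -1) {x y : ℤ} (hxy : (p : ℤ) = x ^ 2 + 4 * y ^ 2)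
    (hN : 16 * (#{a | χ a = 1 ∧ χ (a + 1) = sqrtd} : ℤ) = p + 1 + 2 * x - 8 * y) :
    (jacobiSum χ χ).im = 2 * y := by
  have hχ1 := ne_one_of_orderOf_eq_four hχ
  have hnorm := sq_re_add_sq_im_jacobiSum hχ1 hχ1
    (by simpa only [sq] using sq_ne_one_of_orderOf_eq_four hχ)
  have hcount := sixteen_mul_card_filter_eq_one_and_add_one_eq_sqrtd hχ hneg
  rw [ZMod.card] at hnorm hcount
  refine eq_two_mul_of_prime_eq_sq_add_sq (Nat.prime_iff_prime_int.mp Fact.out) hnorm.symm hxy ?_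
  linarith

end JacobiSumOfCyclotomicNumber

section GaussPeriods

variable {F R K : Type*} [Field F] [Fintype F] [CommRing R] [DecidableEq R] [CommRing K]

/-- The Gaussian period `∑ ψ t` over the cyclotomic class `{t | χ t = ζ ^ k}`. The class is cut out
by a multiplicative character `χ` and a root of unity `ζ` rather than by a generator of `Fˣ`. -/
def gaussPeriod (χ : MulChar F R) (ζ : R) (ψ : AddChar F K) (k : ℕ) : K :=
  ∑ t with χ t = ζ ^ k, ψ t

lemma gaussSum_ringHomComp_pow_eq_sum_gaussPeriod [IsDomain R] {χ : MulChar F R} {ζ : R} {n : ℕ}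
    [NeZero n] (hχ : χ ^ n = 1) (hζ : IsPrimitiveRoot ζ n) (f : R →+* K) (ψ : AddChar F K)
    (m : ℕ) :
    gaussSum ((χ ^ m).ringHomComp f) ψ =
      ∑ k ∈ range n, f ζ ^ (m * k) * gaussPeriod χ ζ ψ k := by
  simp only [gaussPeriod, sum_filter, mul_sum]
  rw [sum_comm]
  refine sum_congr rfl fun a _ => ?_
  rw [MulChar.ringHomComp_apply]
  rcases eq_or_ne a 0 with rfl | ha
  · simp [(hζ.isUnit (NeZero.ne n)).pow _ |>.ne_zero.symm, MulChar.map_zero]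
  obtain ⟨j, hj, hχa⟩ := MulChar.exists_apply_eq_pow hχ hζ ha
  have hpow : (χ ^ m) a = ζ ^ (m * j) := by
    rw [← Units.val_mk0 ha, MulChar.pow_apply_coe, Units.val_mk0, hχa, ← pow_mul, mul_comm]
  have hne (k : ℕ) (hk : k ∈ range n) (hkj : k ≠ j) : χ a ≠ ζ ^ k := fun h =>
    hkj (hζ.pow_inj (mem_range.mp hk) hj (h.symm.trans hχa))
  rw [sum_eq_single_of_mem j (mem_range.mpr hj) fun k hk hkj => by
    rw [if_neg (hne k hk hkj), mul_zero], if_pos hχa, hpow, map_pow]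

end GaussPeriods

section QuarticGaussPeriods

variable {F K : Type*} [Field F] [Field K] {χ : MulChar F GaussianInt}

lemma map_sqrtd_sq (f : GaussianInt →+* K) : f sqrtd ^ 2 = -1 := by
  rw [← map_pow, show (sqrtd : GaussianInt) ^ 2 = -1 by decide, map_neg, map_one]

lemma map_gaussianInt_eq_re_add_im_mul (f : GaussianInt →+* K) (z : GaussianInt) :
    f z = z.re + z.im * f sqrtd := by
  have hz : z = (z.re : GaussianInt) + sqrtd * (z.im : GaussianInt) := Zsqrtd.decompose
  conv_lhs => rw [hz]
  rw [map_add, map_mul, map_intCast, map_intCast, mul_comm]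

lemma orderOf_ringHomComp_gaussianInt (hK : (2 : K) ≠ 0) (f : GaussianInt →+* K)
    (hχ : orderOf χ = 4) : orderOf (χ.ringHomComp f) = 4 := by
  have hχ4 := pow_four_eq_one_of_orderOf_eq_four hχ
  refine orderOf_eq_prime_pow (p := 2) (n := 1) (fun h => ?_) ?_
  · obtain ⟨a, ha⟩ := MulChar.ne_one_iff.mp (sq_ne_one_of_orderOf_eq_four hχ)
    have hfa : f ((χ ^ 2) a) = 1 := by
      rw [← MulChar.ringHomComp_apply, ← MulChar.ringHomComp_pow, ← pow_one 2, h,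
        MulChar.one_apply_coe]
    have hsq : (χ ^ 2) a ^ 2 = 1 := by
      rw [← MulChar.pow_apply_coe, ← pow_mul, hχ4, MulChar.one_apply_coe]
    rw [(sq_eq_one_iff.mp hsq).resolve_left ha, map_neg, map_one] at hfa
    exact hK (by linear_combination -hfa)
  · rw [MulChar.ringHomComp_pow]
    exact (congrArg (MulChar.ringHomComp · f) hχ4).trans (MulChar.ringHomComp_one f)

variable [Fintype F] {ψ : AddChar F K}

lemma sum_gaussPeriod_eq_neg_one (hχ : orderOf χ = 4) (f : GaussianInt →+* K) (hψ : ψ ≠ 1) :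
    gaussPeriod χ sqrtd ψ 0 + gaussPeriod χ sqrtd ψ 1 + gaussPeriod χ sqrtd ψ 2 +
      gaussPeriod χ sqrtd ψ 3 = -1 := by
  have h := gaussSum_ringHomComp_pow_eq_sum_gaussPeriod
    (pow_four_eq_one_of_orderOf_eq_four hχ) isPrimitiveRoot_sqrtd f ψ 0
  rw [pow_zero, MulChar.ringHomComp_one, gaussSum_one_left hψ] at h
  simpa only [sum_range_succ, sum_range_zero, zero_mul, pow_zero, one_mul, zero_add] using h.symm

lemma gaussSum_ringHomComp_eq_gaussPeriod (hχ : orderOf χ = 4) (f : GaussianInt →+* K)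
    (ψ : AddChar F K) :
    gaussSum (χ.ringHomComp f) ψ =
      gaussPeriod χ sqrtd ψ 0 - gaussPeriod χ sqrtd ψ 2 +
        f sqrtd * (gaussPeriod χ sqrtd ψ 1 - gaussPeriod χ sqrtd ψ 3) := by
  have h := gaussSum_ringHomComp_pow_eq_sum_gaussPeriod
    (pow_four_eq_one_of_orderOf_eq_four hχ) isPrimitiveRoot_sqrtd f ψ 1
  simp only [pow_one, sum_range_succ, sum_range_zero] at h
  linear_combination h + (gaussPeriod χ sqrtd ψ 2 + f sqrtd * gaussPeriod χ sqrtd ψ 3) *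
    map_sqrtd_sq f

lemma gaussSum_ringHomComp_inv_eq_gaussPeriod (hχ : orderOf χ = 4) (f : GaussianInt →+* K)
    (ψ : AddChar F K) :
    gaussSum (χ.ringHomComp f)⁻¹ ψ =
      gaussPeriod χ sqrtd ψ 0 - gaussPeriod χ sqrtd ψ 2 -
        f sqrtd * (gaussPeriod χ sqrtd ψ 1 - gaussPeriod χ sqrtd ψ 3) := by
  have h := gaussSum_ringHomComp_pow_eq_sum_gaussPeriod
    (pow_four_eq_one_of_orderOf_eq_four hχ) isPrimitiveRoot_sqrtd f ψ 3
  rw [pow_three_eq_inv_of_orderOf_eq_four hχ, ← MulChar.ringHomComp_inv] at h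
  simp only [sum_range_succ, sum_range_zero] at h
  linear_combination h + (f sqrtd * gaussPeriod χ sqrtd ψ 1 +
    (f sqrtd ^ 4 - f sqrtd ^ 2 + 1) * gaussPeriod χ sqrtd ψ 2 +
    f sqrtd * (f sqrtd ^ 4 + 1) * (f sqrtd ^ 2 - 1) * gaussPeriod χ sqrtd ψ 3) * map_sqrtd_sq f

lemma gaussSum_ringHomComp_sq_eq_gaussPeriod (hχ : orderOf χ = 4) (f : GaussianInt →+* K)
    (ψ : AddChar F K) :
    gaussSum (χ.ringHomComp f ^ 2) ψ =
      gaussPeriod χ sqrtd ψ 0 - gaussPeriod χ sqrtd ψ 1 + gaussPeriod χ sqrtd ψ 2 -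
        gaussPeriod χ sqrtd ψ 3 := by
  have h := gaussSum_ringHomComp_pow_eq_sum_gaussPeriod
    (pow_four_eq_one_of_orderOf_eq_four hχ) isPrimitiveRoot_sqrtd f ψ 2
  simp only [pow_mul, map_sqrtd_sq, sum_range_succ, sum_range_zero] at h
  rw [MulChar.ringHomComp_pow]
  linear_combination h

lemma gaussPeriod_sub_add_sub_sq (hK : (2 : K) ≠ 0) (hχ : orderOf χ = 4) (f : GaussianInt →+* K)
    (hψ : ψ.IsPrimitive) :
    (gaussPeriod χ sqrtd ψ 0 - gaussPeriod χ sqrtd ψ 1 + gaussPeriod χ sqrtd ψ 2 -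
      gaussPeriod χ sqrtd ψ 3) ^ 2 = Fintype.card F := by
  rw [← gaussSum_ringHomComp_sq_eq_gaussPeriod hχ f,
    gaussSum_sq_sq_of_orderOf_eq_four (orderOf_ringHomComp_gaussianInt hK f hχ) hψ]

lemma gaussPeriod_sub_sq_add_sub_sq (hK : (2 : K) ≠ 0) (hχ : orderOf χ = 4)
    (f : GaussianInt →+* K) (hψ : ψ.IsPrimitive) :
    (gaussPeriod χ sqrtd ψ 0 - gaussPeriod χ sqrtd ψ 2) ^ 2 +
      (gaussPeriod χ sqrtd ψ 1 - gaussPeriod χ sqrtd ψ 3) ^ 2 =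
        f (χ (-1)) * Fintype.card F := by
  have h := gaussSum_mul_gaussSum_inv
    (ne_one_of_orderOf_eq_four (orderOf_ringHomComp_gaussianInt hK f hχ)) hψ
  rw [gaussSum_ringHomComp_eq_gaussPeriod hχ, gaussSum_ringHomComp_inv_eq_gaussPeriod hχ,
    MulChar.ringHomComp_apply] at h
  linear_combination h + (gaussPeriod χ sqrtd ψ 1 - gaussPeriod χ sqrtd ψ 3) ^ 2 * map_sqrtd_sq f

lemma two_mul_gaussPeriod_sub_mul_sub (hK : (2 : K) ≠ 0) (hχ : orderOf χ = 4)
    (f : GaussianInt →+* K) (ψ : AddChar F K) :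
    2 * (gaussPeriod χ sqrtd ψ 0 - gaussPeriod χ sqrtd ψ 2) *
        (gaussPeriod χ sqrtd ψ 1 - gaussPeriod χ sqrtd ψ 3) =
      (jacobiSum χ χ).im * (gaussPeriod χ sqrtd ψ 0 - gaussPeriod χ sqrtd ψ 1 +
        gaussPeriod χ sqrtd ψ 2 - gaussPeriod χ sqrtd ψ 3) := by
  have hord := orderOf_ringHomComp_gaussianInt hK f hχ
  have hJ : jacobiSum (χ.ringHomComp f)⁻¹ (χ.ringHomComp f)⁻¹ = f (star (jacobiSum χ χ)) := by
    rw [MulChar.ringHomComp_inv, jacobiSum_ringHomComp, jacobiSum_inv_inv_eq_star]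
  have hsq := gaussSum_sq_eq_jacobiSum_mul_gaussSum_sq (sq_ne_one_of_orderOf_eq_four hord) ψ
  have hsq_inv := gaussSum_sq_eq_jacobiSum_mul_gaussSum_sq
    (sq_ne_one_of_orderOf_eq_four ((orderOf_inv _).trans hord)) ψ
  rw [gaussSum_ringHomComp_eq_gaussPeriod hχ, jacobiSum_ringHomComp,
    gaussSum_ringHomComp_sq_eq_gaussPeriod hχ,
    map_gaussianInt_eq_re_add_im_mul f (jacobiSum χ χ)] at hsq
  rw [gaussSum_ringHomComp_inv_eq_gaussPeriod hχ, hJ, inv_sq_eq_sq_of_orderOf_eq_four hord,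
    gaussSum_ringHomComp_sq_eq_gaussPeriod hχ,
    map_gaussianInt_eq_re_add_im_mul f (star (jacobiSum χ χ)), Zsqrtd.re_star, Zsqrtd.im_star,
    Int.cast_neg] at hsq_inv
  have hi : f sqrtd ≠ 0 := ne_zero_pow two_ne_zero (by rw [map_sqrtd_sq]; simp)
  refine mul_left_cancel₀ (mul_ne_zero hK hi) ?_
  linear_combination hsq - hsq_inv

lemma five_mul_card_add_nine_sq_of_gaussPeriod (hK : (2 : K) ≠ 0) (hχ : orderOf χ = 4)
    (hneg : χ (-1) = -1) (f : GaussianInt →+* K) (hψ : ψ.IsPrimitive)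
    (hU : 3 + gaussPeriod χ sqrtd ψ 1 + 2 * gaussPeriod χ sqrtd ψ 2 +
      3 * gaussPeriod χ sqrtd ψ 3 = 0) :
    (5 * (Fintype.card F : K) + 9) ^ 2 =
      4 * Fintype.card F * (3 + 2 * (jacobiSum χ χ).im) ^ 2 := by
  have hsum := sum_gaussPeriod_eq_neg_one hχ f (AddChar.mulShift_one ψ ▸ hψ one_ne_zero)
  have hH := gaussPeriod_sub_add_sub_sq hK hχ f hψ
  have hAB := gaussPeriod_sub_sq_add_sub_sq hK hχ f hψ
  have hmul := two_mul_gaussPeriod_sub_mul_sub hK hχ f ψ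
  rw [hneg, map_neg, map_one] at hAB
  set e := gaussPeriod χ sqrtd ψ
  set q := (Fintype.card F : K)
  set b := ((jacobiSum χ χ).im : K)
  have hlin : 2 * ((e 0 - e 2) + (e 1 - e 3)) = 3 - (e 0 - e 1 + e 2 - e 3) := by
    linear_combination -2 * hU + 3 * hsum
  have hHlin : 5 * q + 9 = (6 + 4 * b) * (e 0 - e 1 + e 2 - e 3) := by
    linear_combination
      -(2 * ((e 0 - e 2) + (e 1 - e 3)) + 3 - (e 0 - e 1 + e 2 - e 3)) * hlin +
        4 * hAB + 4 * hmul - hH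
  rw [hHlin, mul_pow, hH]
  ring

end QuarticGaussPeriods

section PeriodDivisibility

variable {p θ : ℕ} [Fact p.Prime]

lemma intCast_eta4_eq_gaussPeriod {K : Type*} [CommRing K] {χ : MulChar (ZMod p) GaussianInt}
    (hp4 : 4 ∣ p - 1) (hθ : IsPrimitiveRoot (θ : ZMod p) (p - 1)) (hχ : χ θ = sqrtd)
    (h4 : (4 : K) ^ p = 1) {k : ℕ} (hk : k < 4) :
    (eta4 p θ k : K) = gaussPeriod χ sqrtd (AddChar.zmodChar p h4) k := by
  rw [gaussPeriod, ← sum_cycD hp4 hθ hχ hk, eta4]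
  push_cast
  exact sum_congr rfl fun t _ => (AddChar.zmodChar_apply' h4 t).symm

lemma exists_quartic_mulChar {x y : ℤ} (hp8 : p % 8 = 5)
    (hxy : (p : ℤ) = x ^ 2 + 4 * y ^ 2) (hθ : IsPrimitiveRoot (θ : ZMod p) (p - 1))
    (hN : 16 * (#{a ∈ cycD p θ 0 | (a + 1) % p ∈ cycD p θ 1} : ℤ) = p + 1 + 2 * x - 8 * y) :
    ∃ χ : MulChar (ZMod p) GaussianInt, χ θ = sqrtd ∧ orderOf χ = 4 ∧ χ (-1) = -1 ∧
      (jacobiSum χ χ).im = 2 * y := by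
  have hp4 : 4 ∣ p - 1 := by omega
  have hθ' : IsPrimitiveRoot (θ : ZMod p) (Fintype.card (ZMod p) - 1) := by rwa [ZMod.card]
  obtain ⟨χ, hχ⟩ : ∃ χ : MulChar (ZMod p) GaussianInt, χ θ = sqrtd :=
    exists_mulChar_apply_eq hθ' <| by
      rw [ZMod.card]
      exact (isPrimitiveRoot_sqrtd.pow_eq_one_iff_dvd _).mpr hp4
  have hord : orderOf χ = 4 := by
    rw [orderOf_mulChar_eq_orderOf_apply hθ', hχ, ← isPrimitiveRoot_sqrtd.eq_orderOf]
  have hneg : χ (-1) = -1 := mulChar_neg_one_of_card_mod_eight (by rwa [ZMod.card]) hθ' hχ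
  rw [card_filter_cycD_zero_one hp4 hθ hχ] at hN
  exact ⟨χ, hχ, hord, hneg, im_jacobiSum_eq_two_mul hord hneg hxy hN⟩

lemma five_mul_add_nine_sq_of_eta4 {K : Type*} [Field K] {x y : ℤ} (hp8 : p % 8 = 5)
    (hxy : (p : ℤ) = x ^ 2 + 4 * y ^ 2) (hθ : IsPrimitiveRoot (θ : ZMod p) (p - 1))
    (hN : 16 * (#{a ∈ cycD p θ 0 | (a + 1) % p ∈ cycD p θ 1} : ℤ) = p + 1 + 2 * x - 8 * y)
    (hK : (2 : K) ≠ 0) (f : GaussianInt →+* K) (h4 : IsPrimitiveRoot (4 : K) p)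
    (hU : 3 + (eta4 p θ 1 : K) + 2 * eta4 p θ 2 + 3 * eta4 p θ 3 = 0) :
    (5 * (p : K) + 9) ^ 2 = 4 * p * (3 + 4 * y) ^ 2 := by
  obtain ⟨χ, hχ, hord, hneg, him⟩ := exists_quartic_mulChar hp8 hxy hθ hN
  have hη {k : ℕ} (hk : k < 4) := intCast_eta4_eq_gaussPeriod (by omega) hθ hχ h4.pow_eq_one hk
  rw [hη (by norm_num), hη (by norm_num), hη (by norm_num)] at hU
  have hrel := five_mul_card_add_nine_sq_of_gaussPeriod hK hord hneg f
    (AddChar.zmodChar_primitive_of_primitive_root p h4) hU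
  rw [ZMod.card, him, Int.cast_mul, Int.cast_ofNat] at hrel
  linear_combination hrel

lemma dvd_five_mul_add_nine_sq_sub_of_dvd_eta4 {q : ℕ} [Fact q.Prime] {x y : ℤ} (hp8 : p % 8 = 5)
    (hxy : (p : ℤ) = x ^ 2 + 4 * y ^ 2) (hθ : IsPrimitiveRoot (θ : ZMod p) (p - 1))
    (hN : 16 * (#{a ∈ cycD p θ 0 | (a + 1) % p ∈ cycD p θ 1} : ℤ) = p + 1 + 2 * x - 8 * y)
    (hq : q ≠ 2) (h4 : IsPrimitiveRoot (4 : ZMod q) p)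
    (hU : (q : ℤ) ∣ 3 + eta4 p θ 1 + 2 * eta4 p θ 2 + 3 * eta4 p θ 3) :
    (q : ℤ) ∣ (5 * p + 9) ^ 2 - 4 * p * (3 + 4 * y) ^ 2 := by
  rw [← CharP.intCast_eq_zero_iff (AlgebraicClosure (ZMod q)) q] at hU ⊢
  obtain ⟨i, hi⟩ := IsAlgClosed.exists_eq_mul_self (-1 : AlgebraicClosure (ZMod q))
  let f : GaussianInt →+* AlgebraicClosure (ZMod q) :=
    Zsqrtd.lift ⟨i, by rw [← hi, Int.cast_neg, Int.cast_one]⟩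
  have hchar : (2 : AlgebraicClosure (ZMod q)) ≠ 0 :=
    Ring.two_ne_zero (by rwa [ringChar.eq (AlgebraicClosure (ZMod q)) q])
  have h4' := h4.map_of_injective (algebraMap (ZMod q) (AlgebraicClosure (ZMod q))).injective
  rw [map_ofNat] at h4'
  push_cast at hU ⊢
  exact sub_eq_zero.mpr (five_mul_add_nine_sq_of_eta4 hp8 hxy hθ hN hchar f h4' hU)

end PeriodDivisibility

section PrimeDivisors

lemma isPrimitiveRoot_intCast_of_dvd_pow_sub_one {p n : ℕ} [Fact p.Prime] {a : ℤ}
    (hpow : (n : ℤ) ∣ a ^ p - 1) (hone : ¬(n : ℤ) ∣ a - 1) :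
    IsPrimitiveRoot (a : ZMod n) p := by
  rw [← ZMod.intCast_zmod_eq_zero_iff_dvd, Int.cast_sub, Int.cast_one, sub_eq_zero] at hpow hone
  rw [Int.cast_pow] at hpow
  exact orderOf_eq_prime hpow hone ▸ IsPrimitiveRoot.orderOf _

variable {q : ℕ} [Fact q.Prime]

lemma dvd_sub_one_of_isPrimitiveRoot {n : ℕ} (hn : n ≠ 0) {a : ZMod q}
    (ha : IsPrimitiveRoot a n) : n ∣ q - 1 :=
  ha.eq_orderOf ▸ ZMod.orderOf_dvd_card_sub_one (ha.isUnit hn).ne_zero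

lemma ne_one_add_four_mul_of_four_pow_eq_one {p : ℕ} (hp : p % 2 = 1)
    (h4 : (4 : ZMod q) ^ p = 1) : q ≠ 1 + 4 * p := by
  intro hq
  have h2 : (2 : ZMod q) ≠ 0 := Ring.two_ne_zero (by rw [ZMod.ringChar_zmod_n]; omega)
  have hsq : IsSquare (2 : ZMod q) := by
    rw [ZMod.euler_criterion q h2, show q / 2 = 2 * p by omega, pow_mul]
    norm_num [h4]
  rcases (ZMod.exists_sq_eq_two_iff (by omega)).mp hsq with h | h <;> omega

lemma exists_eq_one_add_mul_of_isPrimitiveRoot_four {p : ℕ} (hp : p % 2 = 1)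
    (hq : q ≠ 2) (h4 : IsPrimitiveRoot (4 : ZMod q) p) :
    ∃ k, q = 1 + k * p ∧ Even k ∧ k ≠ 4 := by
  have hq1 := (Fact.out : q.Prime).one_lt
  have hq_odd := (Fact.out : q.Prime).eq_two_or_odd'.resolve_left hq
  obtain ⟨k, hk⟩ := dvd_sub_one_of_isPrimitiveRoot (by omega) h4
  obtain rfl : q = 1 + k * p := by rw [mul_comm, ← hk]; omega
  have hk2 : Even k := by
    rw [Nat.odd_add, iff_true_left odd_one, Nat.even_mul] at hq_odd
    exact hq_odd.resolve_right (Nat.not_even_iff.mpr hp)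
  refine ⟨k, rfl, hk2, ?_⟩
  rintro rfl
  exact ne_one_add_four_mul_of_four_pow_eq_one hp h4.pow_eq_one rfl

end PrimeDivisors

section SizeOfCofactor

lemma four_mul_mul_sq_lt_sq_five_mul_add_nine {p y : ℤ} (hp : 0 < p) (hp9 : p ≠ 9)
    (hy : 4 * y ^ 2 ≤ p) : 4 * p * (3 + 4 * y) ^ 2 < (5 * p + 9) ^ 2 := by
  have hlin : 32 * p * y < 3 * (p + 3) ^ 2 := by
    refine lt_of_pow_lt_pow_left₀ 2 (by positivity) ?_
    have hbound : (32 * p * y) ^ 2 ≤ 256 * p ^ 3 := by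
      linarith [mul_le_mul_of_nonneg_left hy (show 0 ≤ 256 * p ^ 2 by positivity)]
    have hgap : 256 * p ^ 3 < 9 * (p + 3) ^ 4 := by
      have := sub_ne_zero.mpr hp9
      have hfactor : 0 < (p - 9) ^ 2 * (9 * p ^ 2 + 14 * p + 9) := by positivity
      linarith
    linarith
  linarith [mul_le_mul_of_nonneg_left hy (show 0 ≤ 16 * p by positivity)]

lemma eight_dvd_sq_five_mul_add_nine_sub {p s : ℤ} (hp8 : p % 8 = 5) (hs : Odd s) :
    8 ∣ (5 * p + 9) ^ 2 - 4 * p * s ^ 2 := by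
  have hp : p ≡ 5 [ZMOD 8] := hp8
  have hs8 : s ^ 2 ≡ 1 [ZMOD 8] := (Int.modEq_iff_dvd.mpr (Int.eight_dvd_sq_sub_one_of_odd hs)).symm
  refine (Int.modEq_zero_iff_dvd).mp ?_
  calc (5 * p + 9) ^ 2 - 4 * p * s ^ 2
      ≡ (5 * 5 + 9) ^ 2 - 4 * 5 * 1 [ZMOD 8] := by gcongr
    _ ≡ 0 [ZMOD 8] := by decide

lemma exists_cofactor_eq {p k s : ℤ} (hp : 0 < p) (hk : 0 ≤ k) (hk2 : Even k) (hp8 : p % 8 = 5)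
    (hs : Odd s) (hpos : 4 * p * s ^ 2 < (5 * p + 9) ^ 2)
    (hdvd : 1 + k * p ∣ (5 * p + 9) ^ 2 - 4 * p * s ^ 2) :
    ∃ j, j % 8 = 3 ∧ 0 < 81 + p * j ∧ (1 + k * p) * j = 25 * p + 90 - 81 * k - 4 * s ^ 2 := by
  obtain ⟨m, hm⟩ := hdvd
  have hm_pos : 0 < m := pos_of_mul_pos_right (hm ▸ sub_pos.mpr hpos) (by positivity)
  have hcop : IsCoprime ((2 : ℤ) ^ 3) (1 + k * p) := by
    obtain ⟨l, rfl⟩ := hk2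
    exact IsCoprime.pow_left ⟨-(l * p), 1, by ring⟩
  obtain ⟨n, rfl⟩ : 2 ^ 3 ∣ m :=
    hcop.dvd_of_dvd_mul_left (hm ▸ eight_dvd_sq_five_mul_add_nine_sub hp8 hs)
  -- The cofactor `2 ^ 3 * n` is `81` modulo `p`.
  obtain ⟨j, hj⟩ : ∃ j, 25 * p + 90 - 4 * s ^ 2 - k * (2 ^ 3 * n) = j := ⟨_, rfl⟩
  have hmj : 2 ^ 3 * n = 81 + p * j := by linear_combination -hm + p * hj
  refine ⟨j, ?_, hmj ▸ hm_pos, by linear_combination -k * hmj - hj⟩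
  obtain ⟨u, rfl⟩ : ∃ u, p = 8 * u + 5 := ⟨p / 8, by omega⟩
  have : 8 * (n - u * j) = 81 + 5 * j := by linear_combination hmj
  omega

lemma eq_three_or_eleven_of_cofactor_eq {p k s j : ℤ} (hp : 0 < p) (hk : 2 ≤ k) (hk2 : Even k)
    (hk4 : k ≠ 4) (hj : 0 ≤ j) (hj8 : j % 8 = 3)
    (h : (1 + k * p) * j = 25 * p + 90 - 81 * k - 4 * s ^ 2) :
    (j = 3 ∧ (k = 2 ∨ k = 6 ∨ k = 8)) ∨ (j = 11 ∧ k = 2) := by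
  have hkj : k * j < 25 := by
    by_contra! hle
    nlinarith [mul_le_mul_of_nonneg_right hle hp.le, sq_nonneg s]
  have hj12 : j ≤ 12 := by nlinarith
  have hj' : j = 3 ∨ j = 11 := by omega
  obtain ⟨l, rfl⟩ := hk2
  rcases hj' with rfl | rfl <;> omega

lemma three_dvd_one_add_mul {p k s : ℤ} (hp : ¬3 ∣ p) (hk : k % 3 = 2) (h : p ≡ s ^ 2 [ZMOD 3]) :
    3 ∣ 1 + k * p := by
  have hs : s ^ 2 ≡ 1 [ZMOD 3] := by
    refine Int.ModEq.pow_card_sub_one_eq_one Nat.prime_three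
      (Int.prime_three.coprime_iff_not_dvd.mpr fun h3 => hp ?_).symm
    exact h.dvd_iff.mpr (dvd_pow h3 two_ne_zero)
  have hk' : k ≡ 2 [ZMOD 3] := hk
  refine Int.modEq_zero_iff_dvd.mp ?_
  calc 1 + k * p ≡ 1 + 2 * 1 [ZMOD 3] := by gcongr; exact h.trans hs
    _ ≡ 0 [ZMOD 3] := by decide

lemma seven_dvd_one_add_six_mul {p s : ℤ} (h : 7 * p = 4 * s ^ 2 + 399) : 7 ∣ 1 + 6 * p := by
  have hs : 7 ∣ s := Int.Prime.dvd_pow' (p := 7) (k := 2) (by norm_num) (by omega)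
  obtain ⟨w, rfl⟩ := hs
  have hp : p = 28 * w ^ 2 + 57 := by linarith
  exact ⟨24 * w ^ 2 + 49, by linear_combination 6 * hp⟩

variable {p q : ℕ} {s y : ℤ}

lemma eq_two_of_cofactor_eq {k : ℕ} {j : ℤ} (hp : p.Prime) (hp3 : 3 < p) (hq : q.Prime)
    (hqk : (q : ℤ) = 1 + k * p) (hk : 2 ≤ k) (hk2 : Even k) (hk4 : k ≠ 4) (hj : 0 ≤ j)
    (hj8 : j % 8 = 3) (h : (1 + k * p) * j = 25 * p + 90 - 81 * k - 4 * s ^ 2) :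
    k = 2 ∧ 3 * (p : ℤ) = 4 * s ^ 2 + 83 := by
  have hp3' : ¬(3 : ℤ) ∣ p := by
    rw [show (3 : ℤ) = (3 : ℕ) from rfl, Int.natCast_dvd_natCast, Nat.prime_dvd_prime_iff_eq
      Nat.prime_three hp]
    exact hp3.ne
  have hpq : p < q := by
    zify
    nlinarith
  have hne {r : ℕ} (hr : r.Prime) (hrq : r < q) : ¬(r : ℤ) ∣ 1 + k * p := by
    rw [← hqk, Int.natCast_dvd_natCast, Nat.prime_dvd_prime_iff_eq hr hq]
    exact hrq.ne
  have h3 (hk3 : (k : ℤ) % 3 = 2) (hps : (p : ℤ) ≡ s ^ 2 [ZMOD 3]) : False :=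
    hne Nat.prime_three (hp3.trans hpq) (three_dvd_one_add_mul hp3' hk3 hps)
  rcases eq_three_or_eleven_of_cofactor_eq (by omega) (by omega) (by exact_mod_cast hk2) (by omega)
    hj hj8 h with ⟨rfl, hk⟩ | ⟨rfl, hk⟩
  · rcases hk with hk | hk | hk <;> rw [hk] at h
    · exact (h3 (by omega) (Int.modEq_iff_dvd.mpr ⟨6 * p - s ^ 2 - 25, by linarith⟩)).elim
    · rw [hk] at hne hqk
      have h7q : 7 < q := by omega
      exact absurd (seven_dvd_one_add_six_mul (by linarith)) (hne Nat.prime_seven h7q)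
    · exact (h3 (by omega) (Int.modEq_iff_dvd.mpr ⟨-s ^ 2 - 187, by linarith⟩)).elim
  · rw [hk] at h
    exact ⟨by omega, by linarith⟩

lemma eq_eleven_of_dvd (hq : q.Prime) (hq3 : 3 < q) (hp : p = 5 ∨ p = 13) (hy : 4 * y ^ 2 ≤ p)
    (hpow : (q : ℤ) ∣ 4 ^ p - 1) (hN : (q : ℤ) ∣ (5 * p + 9) ^ 2 - 4 * p * (3 + 4 * y) ^ 2) :
    q = 11 := by
  have hy1 : -1 ≤ y ∧ y ≤ 1 := by
    constructor <;> rcases hp with rfl | rfl <;> push_cast at hy <;> nlinarith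
  have hgcd := Int.dvd_coe_gcd hN hpow
  have hmem : q ∣ 1 ∨ q ∣ 3 ∨ q ∣ 11 := by
    obtain ⟨hl, hu⟩ := hy1
    zify
    rcases hp with rfl | rfl <;> interval_cases y <;> norm_num at hgcd <;> norm_num [hgcd]
  rcases hmem with h | h | h
  · exact absurd (Nat.dvd_one.mp h) hq.ne_one
  · exact absurd (Nat.le_of_dvd three_pos h) hq3.not_ge
  · exact (Nat.prime_dvd_prime_iff_eq hq (by norm_num)).mp h

lemma eq_eleven_or_eq_of_dvd {k : ℕ} (hp : p.Prime) (hp8 : p % 8 = 5) (hq : q.Prime) (hq3 : 3 < q)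
    (hy : 4 * y ^ 2 ≤ p) (hqk : q = 1 + k * p) (hk2 : Even k) (hk4 : k ≠ 4)
    (hpow : (q : ℤ) ∣ 4 ^ p - 1) (hN : (q : ℤ) ∣ (5 * p + 9) ^ 2 - 4 * p * (3 + 4 * y) ^ 2) :
    q = 11 ∨ (q = 1 + 2 * p ∧ 3 * (p : ℤ) = 4 * (3 + 4 * y) ^ 2 + 83) := by
  have hqk' : (q : ℤ) = 1 + k * p := by exact_mod_cast hqk
  have hk : 2 ≤ k := by
    obtain ⟨l, rfl⟩ := hk2
    by_contra! hl
    obtain rfl : l = 0 := by omega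
    omega
  obtain ⟨j, hj8, hpos, hj⟩ := exists_cofactor_eq (by omega) (by omega)
    (by exact_mod_cast hk2) (by omega) ((show Odd (3 : ℤ) by decide).add_even ⟨2 * y, by ring⟩)
    (four_mul_mul_sq_lt_sq_five_mul_add_nine (by omega) (by omega) hy) (hqk' ▸ hN)
  rcases le_or_gt 0 j with hj0 | hj0
  · obtain ⟨rfl, h⟩ := eq_two_of_cofactor_eq hp (by omega) hq hqk' hk hk2 hk4 hj0 hj8 hj
    exact .inr ⟨hqk, h⟩
  · have hp16 : (p : ℤ) ≤ 16 := by nlinarith [show j ≤ -5 by omega]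
    exact .inl (eq_eleven_of_dvd hq hq3 (by omega) hy hpow hN)

end SizeOfCofactor

theorem lemma8
    (p : ℕ) (hp : p.Prime) (hp8 : p % 8 = 5)
    (x y : ℤ) (hx : x % 4 = 1) (hxy : (p : ℤ) = x ^ 2 + 4 * y ^ 2)
    (θ : ℕ) (hθ : IsPrimitiveRoot (θ : ZMod p) (p - 1))
    (hy : 16 * (((cycD p θ 0).filter (fun a => (a + 1) % p ∈ cycD p θ 1)).card : ℤ)
        = (p : ℤ) + 1 + 2 * x - 8 * y)
    (d : ℤ) (hd : Prime d) (hd3 : 3 < d)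
    (hdvd : d ∣ (Int.gcd (3 + eta4 p θ 1 + 2 * eta4 p θ 2 + 3 * eta4 p θ 3) (((4 : ℤ) ^ p - 1) / 3) : ℤ)) :
    d = 11 ∨ (d = 1 + 2 * (p : ℤ) ∧ 3 * (p : ℤ) = 4 * (3 + 4 * y) ^ 2 + 83) := by
  have := Fact.mk hp
  obtain ⟨q, rfl⟩ := Int.eq_ofNat_of_zero_le (by omega : 0 ≤ d)
  have hq : q.Prime := Nat.prime_iff_prime_int.mpr hd
  have := Fact.mk hq
  have hU := hdvd.trans (Int.gcd_dvd_left ..)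
  have hpow : (q : ℤ) ∣ 4 ^ p - 1 := by
    have h3 : (3 : ℤ) ∣ 4 ^ p - 1 := by simpa using sub_dvd_pow_sub_pow (4 : ℤ) 1 p
    exact (hdvd.trans (Int.gcd_dvd_right ..)).trans (Int.ediv_dvd_of_dvd h3)
  have h4 : IsPrimitiveRoot (4 : ZMod q) p := by
    refine mod_cast isPrimitiveRoot_intCast_of_dvd_pow_sub_one hpow fun h3 => ?_
    exact hd3.not_ge (Int.le_of_dvd three_pos h3)
  have hN := dvd_five_mul_add_nine_sq_sub_of_dvd_eta4 hp8 hxy hθ hy (by omega) h4 hU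
  obtain ⟨k, hqk, hk2, hk4⟩ :=
    exists_eq_one_add_mul_of_isPrimitiveRoot_four (by omega) (by omega) h4
  have hyp : 4 * y ^ 2 ≤ p := hxy ▸ le_add_of_nonneg_left (sq_nonneg x)
  exact_mod_cast eq_eleven_or_eq_of_dvd hp hp8 hq (by omega) hyp hqk hk2 hk4 hpow hN
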